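/- Under the hypotheses of Theorem 2, set Σ := (1/4)∑_{m∈𝓜} f(m) + O(Y(M+log X)/X · ∑ f(n)) and suppose Σ > 0. Then for any 0 < V ≤ Σ, meas{ x ∈ [Y, 2^M X] : Re(F(x)) ≥ V } ≥ (Σ − V) X / (2(M log 2 + log X) · max_{x ∈ [Y, 2^M X]} |F(x)|). -/

import Mathlib

set_option autoImplicit false

open Real MeasureTheory

/-- Nonnegativity of the cosine transform of `g` against the Fejér weight on `[0,T]`. -/
def PDc (T : ℝ) (g : ℝ → ℝ) : Prop :=
  Continuous g ∧ ∀ a : ℝ, 0 ≤ ∫ x in (0:ℝ)..T, g x * cos (a * x) * (1 - x / T)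

lemma PDc_one (T : ℝ) (hT : 0 < T) : PDc T (fun _ => 1) := by
  refine ⟨continuous_const, fun a => ?_⟩
  by_cases ha : a = 0
  · subst ha
    apply intervalIntegral.integral_nonneg hT.le
    intro x hx
    have : x / T ≤ 1 := by rw [div_le_one hT]; exact hx.2
    simp; linarith
  · have h := intervalIntegral.integral_eq_sub_of_hasDerivAt (a := 0) (b := T)
      (f := fun x => sin (a * x) / a * (1 - x / T) - cos (a * x) / (a ^ 2 * T))
      (f' := fun x => 1 * cos (a * x) * (1 - x / T)) ?_ ?_
    · rw [h]
      have h1 : cos (a * T) ≤ 1 := cos_le_one _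
      have h2 : cos (a * T) / (a ^ 2 * T) ≤ 1 / (a ^ 2 * T) := by gcongr
      simp [hT.ne'] at h2 ⊢
      linarith
    · intro x _
      have hx : HasDerivAt (fun x : ℝ => a * x) a x := by
        simpa using (hasDerivAt_id x).const_mul a
      have hw : HasDerivAt (fun x : ℝ => 1 - x / T) (-(1 / T)) x := by
        simpa using ((hasDerivAt_id x).div_const T).const_sub 1
      have := ((hx.sin.div_const a).mul hw).sub (hx.cos.div_const (a ^ 2 * T))
      refine this.congr_deriv ?_
      field_simp
      ring
    · apply Continuous.intervalIntegrable
      fun_prop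

lemma PDc_mul (T : ℝ) (g : ℝ → ℝ) (hg : PDc T g) (b : ℝ) :
    PDc T (fun x => (1 + cos (b * x)) * g x) := by
  obtain ⟨hc, h⟩ := hg
  refine ⟨by fun_prop, fun a => ?_⟩
  have e : ∀ x, (1 + cos (b * x)) * g x * cos (a * x) * (1 - x / T) =
      g x * cos (a * x) * (1 - x / T) + (1 / 2 * (g x * cos ((a + b) * x) * (1 - x / T))
        + 1 / 2 * (g x * cos ((a - b) * x) * (1 - x / T))) := by
    intro x
    rw [add_mul a b x, sub_mul a b x, cos_add, cos_sub]; ring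
  simp_rw [e]
  rw [intervalIntegral.integral_add, intervalIntegral.integral_add,
    intervalIntegral.integral_const_mul, intervalIntegral.integral_const_mul]
  · have := h a; have := h (a + b); have := h (a - b); linarith
  all_goals (apply Continuous.intervalIntegrable; fun_prop)

/-- Riesz product. -/
noncomputable def Rz (th : ℕ → ℝ) (s : Finset ℕ) (x : ℝ) : ℝ := ∏ m ∈ s, (1 + cos (th m * x))

lemma Rz_insert (th : ℕ → ℝ) (s : Finset ℕ) (m : ℕ) (hm : m ∉ s) :
    Rz th (insert m s) = fun x => (1 + cos (th m * x)) * Rz th s x := by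
  funext x; exact Finset.prod_insert hm

lemma Rz_nonneg (th : ℕ → ℝ) (s : Finset ℕ) (x : ℝ) : 0 ≤ Rz th s x :=
  Finset.prod_nonneg fun m _ => by have := neg_one_le_cos (th m * x); linarith

lemma Rz_le (th : ℕ → ℝ) (s : Finset ℕ) (x : ℝ) : Rz th s x ≤ 2 ^ s.card := by
  rw [← Finset.prod_const]
  apply Finset.prod_le_prod <;> intro m _ <;>
    have := neg_one_le_cos (th m * x) <;> have := cos_le_one (th m * x) <;> linarith

lemma Rz_PDc (T : ℝ) (hT : 0 < T) (th : ℕ → ℝ) (s : Finset ℕ) : PDc T (Rz th s) := by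
  classical
  induction s using Finset.induction_on with
  | empty => exact PDc_one T hT
  | insert m s hm ih => rw [Rz_insert th s m hm]; exact PDc_mul T _ ih _

lemma Rz_mass (T : ℝ) (hT : 0 < T) (th : ℕ → ℝ) (s : Finset ℕ) :
    T / 2 ≤ ∫ x in (0:ℝ)..T, Rz th s x * (1 - x / T) := by
  classical
  induction s using Finset.induction_on with
  | empty =>
    simp only [Rz, Finset.prod_empty, one_mul]
    rw [intervalIntegral.integral_sub (by simp) (by
      apply Continuous.intervalIntegrable; fun_prop)]
    simp
    apply le_of_eq; field_simp; ring
  | insert m s hm ih =>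
    obtain ⟨hc, h⟩ := Rz_PDc T hT th s
    refine ih.trans ?_
    rw [Rz_insert th s m hm]
    have e : ∀ x, (1 + cos (th m * x)) * Rz th s x * (1 - x / T) =
      Rz th s x * (1 - x / T) + Rz th s x * cos (th m * x) * (1 - x / T) := by intro x; ring
    simp_rw [e]
    rw [intervalIntegral.integral_add]
    · have := h (th m); linarith
    all_goals (apply Continuous.intervalIntegrable; fun_prop)

lemma Rz_quarter (T : ℝ) (hT : 0 < T) (th : ℕ → ℝ) (s : Finset ℕ) (m : ℕ) (hm : m ∈ s) :
    (1 / 4) * (∫ x in (0:ℝ)..T, Rz th s x * (1 - x / T)) ≤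
      ∫ x in (0:ℝ)..T, Rz th s x * cos (th m * x) * (1 - x / T) := by
  classical
  have hs : s = insert m (s.erase m) := (Finset.insert_erase hm).symm
  rw [hs, Rz_insert th _ m (Finset.notMem_erase m s)]
  obtain ⟨hc, h⟩ := Rz_PDc T hT th (s.erase m)
  have hn := Rz_nonneg th (s.erase m)
  generalize Rz th (s.erase m) = g at *
  have h1 : (∫ x in (0:ℝ)..T, (1 + cos (th m * x)) * g x * (1 - x / T)) ≤
      ∫ x in (0:ℝ)..T, 2 * (g x * (1 - x / T)) := by
    apply intervalIntegral.integral_mono_on hT.le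
    · apply Continuous.intervalIntegrable; fun_prop
    · apply Continuous.intervalIntegrable; fun_prop
    · intro x hx
      have : x / T ≤ 1 := by rw [div_le_one hT]; exact hx.2
      rw [mul_assoc]
      apply mul_le_mul_of_nonneg_right
      · have := cos_le_one (th m * x); linarith
      · exact mul_nonneg (hn x) (by linarith)
  rw [intervalIntegral.integral_const_mul] at h1
  have e : ∀ x, (1 + cos (th m * x)) * g x * cos (th m * x) * (1 - x / T) =
      g x * cos (th m * x) * (1 - x / T) + (1 / 2 * (g x * (1 - x / T))
        + 1 / 2 * (g x * cos ((2 * th m) * x) * (1 - x / T))) := by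
    intro x
    rw [mul_assoc 2, cos_two_mul]; ring
  simp_rw [e]
  rw [intervalIntegral.integral_add, intervalIntegral.integral_add,
    intervalIntegral.integral_const_mul, intervalIntegral.integral_const_mul]
  · have := h (th m); have := h (2 * th m); linarith
  all_goals (apply Continuous.intervalIntegrable; fun_prop)

lemma sum_lower (T : ℝ) (hT : 0 < T) (th : ℕ → ℝ) (s : Finset ℕ) (f : ℕ → ℝ)
    (hf : ∀ n, 0 ≤ f n) (hs : Summable f) :
    (1 / 4) * (∑ m ∈ s, f m) * (∫ x in (0:ℝ)..T, Rz th s x * (1 - x / T)) ≤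
      ∫ x in (0:ℝ)..T, (∑' n, f n * cos (th n * x)) * (Rz th s x * (1 - x / T)) := by
  obtain ⟨hc, h⟩ := Rz_PDc T hT th s
  have hS : ∀ x, Summable fun n => f n * cos (th n * x) := fun x =>
    Summable.of_norm_bounded hs fun n => by
      rw [norm_mul, norm_of_nonneg (hf n)]
      exact mul_le_of_le_one_right (hf n) (abs_cos_le_one _)
  have key : HasSum (fun n => ∫ x in (0:ℝ)..T, f n * cos (th n * x) * (Rz th s x * (1 - x / T)))
      (∫ x in (0:ℝ)..T, (∑' n, f n * cos (th n * x)) * (Rz th s x * (1 - x / T))) := by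
    apply intervalIntegral.hasSum_integral_of_dominated_convergence
      (bound := fun n x => f n * ‖Rz th s x * (1 - x / T)‖)
    · intro n
      apply Continuous.aestronglyMeasurable
      fun_prop
    · intro n
      refine Filter.Eventually.of_forall fun x _ => ?_
      rw [norm_mul, norm_mul, norm_of_nonneg (hf n)]
      gcongr
      exact mul_le_of_le_one_right (hf n) (abs_cos_le_one _)
    · exact Filter.Eventually.of_forall fun x _ => hs.mul_right _
    · simp_rw [tsum_mul_right]
      apply Continuous.intervalIntegrable
      fun_prop
    · exact Filter.Eventually.of_forall fun x _ => (hS x).hasSum.mul_right _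
  have e : ∀ n, (∫ x in (0:ℝ)..T, f n * cos (th n * x) * (Rz th s x * (1 - x / T))) =
      f n * ∫ x in (0:ℝ)..T, Rz th s x * cos (th n * x) * (1 - x / T) := by
    intro n
    rw [← intervalIntegral.integral_const_mul]
    congr 1; funext x; ring
  simp_rw [e] at key
  refine le_trans ?_ (sum_le_hasSum s (fun n _ => mul_nonneg (hf n) (h _)) key)
  rw [Finset.mul_sum, Finset.sum_mul]
  apply Finset.sum_le_sum
  intro m hm
  have := mul_le_mul_of_nonneg_left (Rz_quarter T hT th s m hm) (hf m)
  linarith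

lemma measure_core (G W : ℝ → ℝ) (hG : Continuous G) (hW : Continuous W)
    (T Y V S A B : ℝ) (hY : 0 ≤ Y) (hYT : Y ≤ T) (hV : 0 ≤ V) (hA : 0 ≤ A) (hB : 0 ≤ B)
    (hS : ∀ x, G x ≤ S) (hS0 : 0 ≤ S) (hGA : ∀ x ∈ Set.Icc Y T, G x ≤ A)
    (hW0 : ∀ x ∈ Set.Icc 0 T, 0 ≤ W x) (hWB : ∀ x ∈ Set.Icc 0 T, W x ≤ B) :
    (∫ x in (0:ℝ)..T, G x * W x) ≤ Y * S * B + V * (∫ x in (0:ℝ)..T, W x) +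
      A * B * (volume {x ∈ Set.Icc Y T | V ≤ G x}).toReal := by
  have ii : ∀ (g : ℝ → ℝ) (a b : ℝ), Continuous g → IntervalIntegrable g volume a b :=
    fun g a b hg => hg.intervalIntegrable a b
  have hGW : Continuous fun x => G x * W x := hG.mul hW
  rw [← intervalIntegral.integral_add_adjacent_intervals (ii _ 0 Y hGW) (ii _ Y T hGW),
    ← intervalIntegral.integral_add_adjacent_intervals (ii _ 0 Y hW) (ii _ Y T hW)]
  have h1 : (∫ x in (0:ℝ)..Y, G x * W x) ≤ ∫ x in (0:ℝ)..Y, S * B := by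
    apply intervalIntegral.integral_mono_on hY (ii _ _ _ hGW) (by simp)
    intro x hx
    have hx' : x ∈ Set.Icc 0 T := ⟨hx.1, hx.2.trans hYT⟩
    exact (mul_le_mul_of_nonneg_right (hS x) (hW0 x hx')).trans
      (mul_le_mul_of_nonneg_left (hWB x hx') hS0)
  have h1' : (∫ x in (0:ℝ)..Y, S * B) = Y * S * B := by simp; ring
  have h2 : 0 ≤ ∫ x in (0:ℝ)..Y, W x :=
    intervalIntegral.integral_nonneg hY fun x hx => hW0 x ⟨hx.1, hx.2.trans hYT⟩
  set E := {x ∈ Set.Icc Y T | V ≤ G x} with hE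
  have hEm : MeasurableSet E :=
    measurableSet_Icc.inter (measurableSet_le measurable_const hG.measurable)
  have hEf : volume E ≠ ⊤ := by
    apply ne_top_of_le_ne_top _ (measure_mono (Set.sep_subset _ _ : E ⊆ Set.Icc Y T))
    simp
  have hEi : Integrable (E.indicator fun _ => A * B) volume :=
    (integrable_indicator_iff hEm).2 (integrableOn_const hEf)
  have h3 : (∫ x in Y..T, G x * W x) ≤
      ∫ x in Y..T, (V * W x + E.indicator (fun _ => A * B) x) := by
    apply intervalIntegral.integral_mono_on hYT (ii _ _ _ hGW)
    · exact (ii _ _ _ (by fun_prop)).add hEi.intervalIntegrable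
    intro x hx
    have hx' : x ∈ Set.Icc 0 T := ⟨hY.trans hx.1, hx.2⟩
    have w0 := hW0 x hx'
    by_cases hxE : x ∈ E
    · rw [Set.indicator_of_mem hxE]
      have := (mul_le_mul_of_nonneg_right (hGA x hx) w0).trans
        (mul_le_mul_of_nonneg_left (hWB x hx') hA)
      have := mul_nonneg hV w0
      linarith
    · rw [Set.indicator_of_notMem hxE]
      have : G x < V := by
        by_contra hh
        exact hxE ⟨hx, not_lt.1 hh⟩
      have := mul_le_mul_of_nonneg_right this.le w0
      linarith
  rw [intervalIntegral.integral_add (ii _ _ _ (by fun_prop)) hEi.intervalIntegrable,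
    intervalIntegral.integral_const_mul] at h3
  have h4 : (∫ x in Y..T, E.indicator (fun _ => A * B) x) ≤ A * B * (volume E).toReal := by
    rw [intervalIntegral.integral_of_le hYT]
    refine (setIntegral_le_integral hEi (Filter.Eventually.of_forall fun x => ?_)).trans ?_
    · exact Set.indicator_nonneg (fun _ _ => mul_nonneg hA hB) x
    · rw [integral_indicator_const _ hEm]
      simp [Measure.real, mul_comm]
  have := mul_nonneg hV h2
  linarith

theorem resonance_measure_lower_bound :
    ∃ C : ℝ, 0 < C ∧
      ∀ (lam : ℕ → ℝ), (∀ n, 0 ≤ lam n) → StrictMono lam →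
      ∀ (f : ℕ → ℝ), (∀ n, 0 ≤ f n) → Summable f →
      ∀ (F : ℝ → ℂ),
        (∀ x : ℝ, F x = ∑' n : ℕ, (f n : ℂ) * Complex.exp (2 * π * Complex.I * lam n * x)) →
      ∀ (M : ℕ), 1 ≤ M →
      ∀ (𝓜 : Finset ℕ), 𝓜.card = M →
      ∀ (X Y : ℝ), 1 ≤ Y → Y < 2 ^ M * X →
      ∀ (Sig : ℝ),
        Sig = (1 / 4) * ∑ m ∈ 𝓜, f m -
            C * (Y * ((M : ℝ) + Real.log X) / X) * ∑' n : ℕ, f n →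
        0 < Sig →
      ∀ (V : ℝ), 0 < V → V ≤ Sig →
        ENNReal.ofReal ((Sig - V) * X /
            (2 * ((M : ℝ) * Real.log 2 + Real.log X) *
              sSup ((fun x => ‖F x‖) '' Set.Icc Y (2 ^ M * X)))) ≤
          volume {x ∈ Set.Icc Y (2 ^ M * X) | V ≤ (F x).re} := by
  refine ⟨4, by norm_num, ?_⟩
  intro lam hlam hmono f hf hs F hF M hM 𝓜 hcard X Y hY hYX Sig hSig hSig0 V hV hVS
  set S := ∑' n, f n with hSdef
  set Q := ∑ m ∈ 𝓜, f m with hQdef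
  set T : ℝ := 2 ^ M * X with hTdef
  have hS0 : 0 ≤ S := tsum_nonneg hf
  have hQS : Q ≤ S := hs.sum_le_tsum 𝓜 fun n _ => hf n
  have hT1 : 1 < T := lt_of_le_of_lt hY hYX
  have hT : 0 < T := by linarith
  have hM1 : (1:ℝ) ≤ M := by exact_mod_cast hM
  have hX : 0 < X := by
    by_contra hh
    have : T ≤ 0 := mul_nonpos_of_nonneg_of_nonpos (by positivity) (not_lt.1 hh)
    linarith
  have hlogT : Real.log T = M * Real.log 2 + Real.log X := by
    rw [hTdef, Real.log_mul (by positivity) hX.ne', Real.log_pow]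
  have hlogT0 : 0 < Real.log T := Real.log_pos hT1
  have l2 := Real.log_two_lt_d9
  have l2' := Real.log_two_gt_d9
  -- the quantity M + log X is bounded below
  have hD : 0.3 ≤ (M : ℝ) + Real.log X := by nlinarith
  have hSpos : 0 < S := by
    rcases hS0.eq_or_lt with h | h
    · rw [← h] at hSig hQS; simp at hSig; linarith
    · exact h
  have hXbig : 16 * (Y * ((M : ℝ) + Real.log X)) < X := by
    have h1 : 4 * (Y * ((M : ℝ) + Real.log X) / X) * S < 1 / 4 * S := by linarith
    have h2 := lt_of_mul_lt_mul_right h1 hS0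
    have h3 : Y * ((M : ℝ) + Real.log X) / X < 1 / 16 := by linarith
    rw [div_lt_iff₀ hX] at h3
    linarith
  have hX1 : 1 ≤ X := by nlinarith
  have hlX : 0 ≤ Real.log X := Real.log_nonneg hX1
  have hX16 : 16 ≤ X := by nlinarith
  have hlX1 : 1 ≤ Real.log T := by
    rw [Real.le_log_iff_exp_le hT]
    have := Real.exp_one_lt_d9
    have h2 : (1:ℝ) ≤ 2 ^ M := one_le_pow₀ (by norm_num)
    have : X ≤ T := by rw [hTdef]; nlinarith
    linarith
  -- the real part
  have hnorm : ∀ n (x : ℝ),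
      ‖(f n : ℂ) * Complex.exp (2 * π * Complex.I * lam n * x)‖ = f n := by
    intro n x
    have : (2 * π * Complex.I * lam n * x : ℂ) = ((2 * π * lam n * x : ℝ) : ℂ) * Complex.I := by
      push_cast; ring
    rw [norm_mul, this, Complex.norm_exp_ofReal_mul_I, Complex.norm_real, norm_of_nonneg (hf n),
      mul_one]
  have hsum : ∀ x : ℝ, Summable fun n => (f n : ℂ) * Complex.exp (2 * π * Complex.I * lam n * x) :=
    fun x => Summable.of_norm_bounded hs fun n => (hnorm n x).le
  have hFc : Continuous F := by
    have : F = fun x : ℝ => ∑' n : ℕ, (f n : ℂ) * Complex.exp (2 * π * Complex.I * lam n * x) :=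
      funext hF
    rw [this]
    exact continuous_tsum (fun n => by fun_prop) hs fun n x => (hnorm n x).le
  have hFb : ∀ x, ‖F x‖ ≤ S := by
    intro x
    rw [hF x]
    exact tsum_of_norm_bounded hs.hasSum fun n => (hnorm n x).le
  set th : ℕ → ℝ := fun n => 2 * π * lam n with hth
  have hre : ∀ x, (F x).re = ∑' n, f n * cos (th n * x) := by
    intro x
    rw [hF x, Complex.re_tsum (hsum x)]
    congr 1; funext n
    have : (2 * π * Complex.I * lam n * x : ℂ) = ((th n * x : ℝ) : ℂ) * Complex.I := by
      rw [hth]; push_cast; ring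
    rw [this, Complex.re_ofReal_mul, Complex.exp_ofReal_mul_I_re]
  set A := sSup ((fun x => ‖F x‖) '' Set.Icc Y T) with hAdef
  have hbdd : BddAbove ((fun x => ‖F x‖) '' Set.Icc Y T) :=
    ⟨S, by rintro _ ⟨x, _, rfl⟩; exact hFb x⟩
  have hFA : ∀ x ∈ Set.Icc Y T, ‖F x‖ ≤ A := fun x hx => le_csSup hbdd ⟨x, hx, rfl⟩
  have hA0 : 0 ≤ A := (norm_nonneg _).trans (hFA Y ⟨le_rfl, hYX.le⟩)
  rcases hA0.eq_or_lt with hA | hA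
  · rw [← hA]; simp
  have hRc := (Rz_PDc T hT th 𝓜).1
  have hw : ∀ x ∈ Set.Icc 0 T, 0 ≤ 1 - x / T ∧ 1 - x / T ≤ 1 := by
    intro x hx
    have h1 : x / T ≤ 1 := by rw [div_le_one hT]; exact hx.2
    have h2 : 0 ≤ x / T := div_nonneg hx.1 hT.le
    constructor <;> linarith
  have hcore := measure_core (fun x => (F x).re) (fun x => Rz th 𝓜 x * (1 - x / T))
    (by fun_prop) (by fun_prop) T Y V S A (2 ^ M) (by linarith) hYX.le hV.le hA0 (by positivity)
    (fun x => (Complex.re_le_norm _).trans (hFb x)) hS0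
    (fun x hx => (Complex.re_le_norm _).trans (hFA x hx))
    (fun x hx => mul_nonneg (Rz_nonneg _ _ _) (hw x hx).1)
    (fun x hx => (mul_le_of_le_one_right (Rz_nonneg _ _ _) (hw x hx).2).trans
      (hcard ▸ Rz_le th 𝓜 x))
  have hlow := sum_lower T hT th 𝓜 f hf hs
  have hmass := Rz_mass T hT th 𝓜
  simp_rw [← hre] at hlow
  set N := ∫ x in (0:ℝ)..T, Rz th 𝓜 x * (1 - x / T) with hN
  set mu := (volume {x ∈ Set.Icc Y T | V ≤ (F x).re}).toReal with hmu
  have hfin : volume {x ∈ Set.Icc Y T | V ≤ (F x).re} ≠ ⊤ := by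
    apply ne_top_of_le_ne_top _ (measure_mono (Set.sep_subset _ _ : _ ⊆ Set.Icc Y T))
    simp
  have hSigle : Sig ≤ 1 / 4 * Q - 2 * (Y / X) * S := by
    rw [hSig]
    have h1 : 0 ≤ Y / X := div_nonneg (by linarith) hX.le
    have h2 : 2 * (Y / X) ≤ 4 * (Y * ((M : ℝ) + Real.log X) / X) := by
      rw [mul_div_right_comm]
      nlinarith
    have := mul_le_mul_of_nonneg_right h2 hS0
    linarith
  have hQV : V ≤ 1 / 4 * Q := by
    have : 0 ≤ 2 * (Y / X) * S := by positivity
    linarith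
  have hmain : X / 2 * (1 / 4 * Q - V) - Y * S ≤ A * mu := by
    have h1 : (1 / 4 * Q - V) * (T / 2) ≤ (1 / 4 * Q - V) * N :=
      mul_le_mul_of_nonneg_left hmass (by linarith)
    have h2 : (2:ℝ) ^ M * (X / 2 * (1 / 4 * Q - V) - Y * S) ≤ 2 ^ M * (A * mu) := by
      rw [hTdef] at h1
      nlinarith
    exact le_of_mul_le_mul_left h2 (by positivity)
  have hmain2 : (Sig - V) * X ≤ 2 * A * mu := by
    have h1 := mul_le_mul_of_nonneg_right hSigle hX.le
    have h2 : Y / X * X = Y := div_mul_cancel₀ _ hX.ne'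
    have h3 : (1 / 4 * Q - 2 * (Y / X) * S) * X = 1 / 4 * Q * X - 2 * Y * S := by
      linear_combination (-2 * S) * h2
    linarith
  apply ENNReal.ofReal_le_of_le_toReal
  rw [← hlogT, div_le_iff₀ (by positivity)]
  have hmu0 : 0 ≤ mu := ENNReal.toReal_nonneg
  have : A * mu ≤ A * mu * Real.log T := le_mul_of_one_le_right (by positivity) hlX1
  linarith
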